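/- Let G be a finite group, let (σ_j)_{j∈J} be a complete family of irreducibles for G, let k ≥ 1, let ρ be a unitary representation of the direct power G^k on a finite-dimensional complex inner product space V, and let M ⊆ G be a conjugacy class of involutions with representative m₀. Then for every unit vector b ∈ V, (1/|M|) Σ_{m∈M} ‖Π_m b‖² = 2^{-k} ( 1 + Σ_{∅ ≠ I ⊆ {1,…,k}} Σ_{j∈J} (χ_j(m₀)/d_j) ‖Π_j^I b‖² ), where Π_m = 2^{-k} Σ_{I ⊆ {1,…,k}} ρ(m^I) and Π_j^I = (d_j/|G|) Σ_{g∈G} conj(χ_j(g)) ρ(g^I). -/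

import Mathlib

noncomputable section

open scoped BigOperators InnerProductSpace

def IsUnitaryRep {G V : Type*} [Group G] [NormedAddCommGroup V] [InnerProductSpace ℂ V]
    (ρ : Representation ℂ G V) : Prop :=
  ∀ (g : G) (v w : V), ⟪ρ g v, ρ g w⟫_ℂ = ⟪v, w⟫_ℂ

def IsIrreducibleRep {G V : Type*} [Group G] [AddCommGroup V] [Module ℂ V]
    (ρ : Representation ℂ G V) : Prop :=
  (∃ v : V, v ≠ 0) ∧
    ∀ W : Submodule ℂ V, (∀ (g : G) (v : V), v ∈ W → ρ g v ∈ W) → W = ⊥ ∨ W = ⊤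

def RepIso {G V₁ V₂ : Type*} [Group G] [AddCommGroup V₁] [Module ℂ V₁]
    [AddCommGroup V₂] [Module ℂ V₂]
    (ρ₁ : Representation ℂ G V₁) (ρ₂ : Representation ℂ G V₂) : Prop :=
  ∃ e : V₁ ≃ₗ[ℂ] V₂, ∀ (g : G) (v : V₁), e (ρ₁ g v) = ρ₂ g (e v)

def repChar {G V : Type*} [Group G] [AddCommGroup V] [Module ℂ V]
    (ρ : Representation ℂ G V) (g : G) : ℂ := LinearMap.trace ℂ V (ρ g)

def IsCompleteFamily {G : Type*} [Group G] {J : Type*}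
    (W : J → Type*) [∀ j, NormedAddCommGroup (W j)] [∀ j, InnerProductSpace ℂ (W j)]
    [∀ j, FiniteDimensional ℂ (W j)]
    (σ : ∀ j, Representation ℂ G (W j)) : Prop :=
  (∀ j, IsUnitaryRep (σ j)) ∧ (∀ j, IsIrreducibleRep (σ j)) ∧
    (∀ j j', j ≠ j' → ¬ RepIso (σ j) (σ j')) ∧
    (∀ (U : Type) [AddCommGroup U] [Module ℂ U] [FiniteDimensional ℂ U]
      (τ : Representation ℂ G U), IsIrreducibleRep τ → ∃ j, RepIso τ (σ j))

def isoProj {G V : Type*} [Group G] [Fintype G] [AddCommGroup V] [Module ℂ V]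
    (d : ℕ) (χ : G → ℂ) (ρ : Representation ℂ G V) : V →ₗ[ℂ] V :=
  ((d : ℂ) / (Fintype.card G : ℂ)) • ∑ g : G, starRingEnd ℂ (χ g) • (ρ g : V →ₗ[ℂ] V)

def onI {G : Type*} [One G] {k : ℕ} (g : G) (I : Finset (Fin k)) : Fin k → G :=
  fun i => if i ∈ I then g else 1

def invProj {G V : Type*} [Group G] [AddCommGroup V] [Module ℂ V] {k : ℕ}
    (ρ : Representation ℂ (Fin k → G) V) (m : G) : V →ₗ[ℂ] V :=
  ((2 : ℂ) ^ k)⁻¹ • ∑ I : Finset (Fin k), (ρ (onI m I) : V →ₗ[ℂ] V)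

def isoProjI {G V : Type*} [Group G] [Fintype G] [AddCommGroup V] [Module ℂ V] {k : ℕ}
    (ρ : Representation ℂ (Fin k → G) V) (d : ℕ) (χ : G → ℂ) (I : Finset (Fin k)) :
    V →ₗ[ℂ] V :=
  ((d : ℂ) / (Fintype.card G : ℂ)) • ∑ g : G, starRingEnd ℂ (χ g) • (ρ (onI g I) : V →ₗ[ℂ] V)

/-!
An element of `ℂ[G]` that acts as zero on every `σ_j` acts as zero on every simple module, so it
lies in the Jacobson radical of `ℂ[G]`, which is zero by Maschke's theorem. Hence an identity in
`ℂ[G]` may be checked on the `σ_j`, where Schur's lemma and character orthogonality decide it. In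
this way the element `e_j` defining the `σ_j`-isotypic projection is idempotent, and the average of
the class `M` is `∑ j, (χ_j(m₀) / d_j) e_j`; both hold in every representation.

Since `Π_m` is an orthogonal projection, `‖Π_m b‖²` is the average over `I` of `⟪b, ρ(m^I) b⟫`.
Averaging over `m ∈ M` first, the term `I = ∅` gives `‖b‖²`, and each other `I` is the average of
`M` in the representation `g ↦ ρ(g^I)` of `G`.
-/

open scoped MonoidAlgebra

universe u v

section GroupAlgebra

/-- The element `∑ g, f g • g` of the group algebra `k[G]`: it turns an identity between weighted
sums `∑ g, f g • ρ g`, to be proved in all representations `ρ` at once, into one in `k[G]`. -/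
def weightedSum {k G : Type*} [Semiring k] [Fintype G] (f : G → k) : k[G] :=
  ∑ g, MonoidAlgebra.single g (f g)

theorem asAlgebraHom_weightedSum {k G V : Type*} [CommSemiring k] [Monoid G] [Fintype G]
    [AddCommMonoid V] [Module k V] (ρ : Representation k G V) (f : G → k) :
    ρ.asAlgebraHom (weightedSum f) = ∑ g, f g • ρ g := by
  simp only [weightedSum, map_sum, Representation.asAlgebraHom_single]

theorem weightedSum_mem_center {k G : Type*} [CommSemiring k] [Group G] [Fintype G] {f : G → k}
    (hf : ∀ x g, f (x * g * x⁻¹) = f g) : weightedSum f ∈ Submonoid.center k[G] := by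
  refine Submonoid.mem_center_iff.2 fun z => ?_
  induction z using MonoidAlgebra.induction_linear with
  | zero => rw [zero_mul, mul_zero]
  | add x y hx hy => rw [add_mul, mul_add, hx, hy]
  | single x a =>
    simp only [weightedSum, Finset.mul_sum, Finset.sum_mul, MonoidAlgebra.single_mul_single]
    refine Fintype.sum_equiv (MulAut.conj x).toEquiv _ _ fun g => ?_
    simp [hf, mul_comm a]

end GroupAlgebra

section Representation

theorem intertwiningMap_asAlgebraHom {k G V W : Type*} [CommSemiring k] [Monoid G]
    [AddCommMonoid V] [Module k V] [AddCommMonoid W] [Module k W] {ρ : Representation k G V}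
    {σ : Representation k G W} (f : ρ.IntertwiningMap σ) (z : k[G]) (v : V) :
    f (ρ.asAlgebraHom z v) = σ.asAlgebraHom z (f v) :=
  (Representation.IntertwiningMap.equivLinearMapAsModule ρ σ f).map_smul z v

theorem exists_equiv_fin_fun {k G V : Type*} [CommRing k] [StrongRankCondition k] [Monoid G]
    [AddCommGroup V] [Module k V] [Module.Free k V] [Module.Finite k V]
    (ρ : Representation k G V) :
    ∃ τ : Representation k G (Fin (Module.finrank k V) → k), Nonempty (ρ.Equiv τ) := by
  let e := (Module.finBasis k V).equivFun
  exact ⟨e.conjRingEquiv.toMonoidHom.comp ρ, ⟨.mk e fun g => by ext; simp⟩⟩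

theorem asAlgebraHom_ofModule' {k G : Type*} (M : Type*) [CommSemiring k] [Monoid G]
    [AddCommMonoid M] [Module k M] [Module k[G] M] [IsScalarTower k k[G] M] :
    (Representation.ofModule' M : Representation k G M).asAlgebraHom = Algebra.lsmul k k M :=
  (MonoidAlgebra.lift k (M →ₗ[k] M) G).apply_symm_apply _

end Representation

section Irreducible

variable {k G V W : Type*} [Field k] [Monoid G] [AddCommGroup V] [Module k V]
  [AddCommGroup W] [Module k W] {ρ : Representation k G V} {σ : Representation k G W}

theorem nontrivial_of_isIrreducible (ρ : Representation k G V) [ρ.IsIrreducible] : Nontrivial V :=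
  IsSimpleModule.nontrivial k[G] ρ.asModule

theorem isIrreducible_of_equiv [ρ.IsIrreducible] (φ : ρ.Equiv σ) : σ.IsIrreducible := by
  rw [Representation.irreducible_iff_isSimpleModule_asModule]
  exact IsSimpleModule.congr (LinearEquiv.ofBijective
    (Representation.IntertwiningMap.equivLinearMapAsModule ρ σ φ.toIntertwiningMap)
    φ.toLinearEquiv.bijective).symm

theorem isIrreducible_ofModule' (M : Type*) [AddCommGroup M] [Module k M] [Module k[G] M]
    [IsScalarTower k k[G] M] [IsSimpleModule k[G] M] :
    (Representation.ofModule' M : Representation k G M).IsIrreducible := by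
  let τ : Representation k G M := .ofModule' M
  let e : τ.asModule ≃ₗ[k[G]] M :=
    { τ.asModuleEquiv.toAddEquiv with
      map_smul' := fun z m => by
        change τ.asAlgebraHom z (τ.asModuleEquiv m) = z • τ.asModuleEquiv m
        rw [asAlgebraHom_ofModule']
        rfl }
  exact (Representation.irreducible_iff_isSimpleModule_asModule τ).2 (.congr e)

theorem asAlgebraHom_eq_smul_one_of_mem_center [IsAlgClosed k] [CharZero k] [FiniteDimensional k V]
    [ρ.IsIrreducible] {z : k[G]} (hz : z ∈ Submonoid.center k[G]) :
    ρ.asAlgebraHom z =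
      (LinearMap.trace k V (ρ.asAlgebraHom z) / (Module.finrank k V : k)) • 1 := by
  obtain ⟨c, hc⟩ :=
    (Representation.IsIrreducible.algebraMap_intertwiningMap_bijective_of_isAlgClosed (ρ := ρ)).2
      (Representation.IntertwiningMap.centralAlgebraMul ρ hz)
  have hzc : ρ.asAlgebraHom z = c • 1 :=
    congrArg Representation.IntertwiningMap.toLinearMap hc.symm
  have : Nontrivial V := nontrivial_of_isIrreducible ρ
  have hd : (Module.finrank k V : k) ≠ 0 := Nat.cast_ne_zero.2 Module.finrank_pos.ne'
  rw [hzc, map_smul, LinearMap.trace_one, smul_eq_mul, mul_div_cancel_right₀ _ hd]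

theorem asAlgebraHom_weightedSum_eq_smul_one {G : Type*} [Group G] [Fintype G]
    [IsAlgClosed k] [CharZero k] [FiniteDimensional k V] {ρ : Representation k G V}
    [ρ.IsIrreducible] {f : G → k} (hf : ∀ x g, f (x * g * x⁻¹) = f g) :
    ρ.asAlgebraHom (weightedSum f) =
      ((∑ g, f g * ρ.character g) / (Module.finrank k V : k)) • 1 := by
  have htrace : LinearMap.trace k V (ρ.asAlgebraHom (weightedSum f)) =
      ∑ g, f g * ρ.character g := by
    simp only [asAlgebraHom_weightedSum, map_sum, map_smul, smul_eq_mul, Representation.character]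
  rw [← htrace]
  exact asAlgebraHom_eq_smul_one_of_mem_center (weightedSum_mem_center hf)

end Irreducible

theorem eq_zero_of_forall_isIrreducible {k : Type u} {G : Type v} [Field k] [Group G] [Finite G]
    [NeZero (Nat.card G : k)] {z : k[G]}
    (h : ∀ (U : Type max u v) [AddCommGroup U] [Module k U] [FiniteDimensional k U]
      (τ : Representation k G U) [τ.IsIrreducible], τ.asAlgebraHom z = 0) : z = 0 := by
  suffices z ∈ Ring.jacobson k[G] by
    rwa [IsSemisimpleRing.jacobson_eq_bot, Submodule.mem_bot] at this
  rw [Ring.jacobson, Module.jacobson, Submodule.mem_sInf]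
  intro (I : Submodule k[G] k[G]) hI
  have : IsSimpleModule k[G] (k[G] ⧸ I) := isSimpleModule_iff_isCoatom.2 hI
  have := isIrreducible_ofModule' (k := k) (G := G) (k[G] ⧸ I)
  have : FiniteDimensional k (k[G] ⧸ I) := Module.Finite.trans k[G] _
  have hz : z • (Submodule.Quotient.mk 1 : k[G] ⧸ I) = 0 := by
    have hlsmul := h (k[G] ⧸ I) (.ofModule' (k[G] ⧸ I))
    rw [asAlgebraHom_ofModule'] at hlsmul
    exact LinearMap.congr_fun hlsmul _
  rwa [← Submodule.Quotient.mk_smul, smul_eq_mul, mul_one, Submodule.Quotient.mk_eq_zero] at hz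

theorem isIrreducibleRep_iff_isIrreducible {G V : Type*} [Group G] [AddCommGroup V] [Module ℂ V]
    {ρ : Representation ℂ G V} : IsIrreducibleRep ρ ↔ ρ.IsIrreducible := by
  constructor
  · rintro ⟨⟨v, hv⟩, hW⟩
    have : Nontrivial (Subrepresentation ρ) :=
      ⟨⊥, ⊤, fun h => hv <| (Submodule.mem_bot ℂ).1 <|
        (congrArg Subrepresentation.toSubmodule h).ge Submodule.mem_top⟩
    exact ⟨fun U => (hW U.toSubmodule U.apply_mem_toSubmodule).imp
      (Subrepresentation.toSubmodule_injective ·) (Subrepresentation.toSubmodule_injective ·)⟩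
  · intro h
    have := nontrivial_of_isIrreducible ρ
    exact ⟨exists_ne 0, fun W hW => (eq_bot_or_eq_top (⟨W, hW⟩ : Subrepresentation ρ)).imp
      (congrArg Subrepresentation.toSubmodule) (congrArg Subrepresentation.toSubmodule)⟩

theorem repChar_eq_character {G V : Type*} [Group G] [AddCommGroup V] [Module ℂ V]
    (ρ : Representation ℂ G V) : repChar ρ = ρ.character :=
  rfl

theorem repIso_iff_nonempty_equiv {G V₁ V₂ : Type*} [Group G] [AddCommGroup V₁] [Module ℂ V₁]
    [AddCommGroup V₂] [Module ℂ V₂]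
    {ρ₁ : Representation ℂ G V₁} {ρ₂ : Representation ℂ G V₂} :
    RepIso ρ₁ ρ₂ ↔ Nonempty (ρ₁.Equiv ρ₂) :=
  ⟨fun ⟨e, he⟩ => ⟨.mk e fun g => LinearMap.ext (he g)⟩,
    fun ⟨φ⟩ => ⟨φ.toLinearEquiv, fun g => LinearMap.congr_fun (φ.isIntertwining' g)⟩⟩

section CentralIdempotent

variable {G V W : Type*} [Group G] [Fintype G] [AddCommGroup V] [Module ℂ V]
  [AddCommGroup W] [Module ℂ W]

/-- The element `(d / |G|) ∑ g, conj (χ g) • g` of `ℂ[G]`, for `σ` of dimension `d` and character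
`χ`. If `σ` is irreducible, it acts on any representation as the `σ`-isotypic projection. -/
def centralIdempotent (σ : Representation ℂ G W) : ℂ[G] :=
  ((Module.finrank ℂ W : ℂ) / (Fintype.card G : ℂ)) •
    weightedSum fun g => starRingEnd ℂ (repChar σ g)

theorem asAlgebraHom_centralIdempotent (ρ : Representation ℂ G V) (σ : Representation ℂ G W) :
    ρ.asAlgebraHom (centralIdempotent σ) = isoProj (Module.finrank ℂ W) (repChar σ) ρ := by
  rw [centralIdempotent, map_smul, asAlgebraHom_weightedSum, isoProj]

end CentralIdempotent

namespace IsUnitaryRep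

variable {G H V : Type*} [Group G] [Group H] [NormedAddCommGroup V] [InnerProductSpace ℂ V]
  {ρ : Representation ℂ G V}

theorem comp (hρ : IsUnitaryRep ρ) (φ : H →* G) : IsUnitaryRep (ρ.comp φ) :=
  fun h => hρ (φ h)

theorem inner_apply_left (hρ : IsUnitaryRep ρ) (g : G) (v w : V) :
    ⟪ρ g v, w⟫_ℂ = ⟪v, ρ g⁻¹ w⟫_ℂ := by
  rw [← hρ g v, Representation.self_inv_apply]

theorem conj_repChar [FiniteDimensional ℂ V] (hρ : IsUnitaryRep ρ) (g : G) :
    starRingEnd ℂ (repChar ρ g) = repChar ρ g⁻¹ := by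
  simp only [repChar, LinearMap.trace_eq_sum_inner _ (stdOrthonormalBasis ℂ V), map_sum,
    inner_conj_symm, hρ.inner_apply_left]

theorem isSymmetric_asAlgebraHom_weightedSum [Fintype G] (hρ : IsUnitaryRep ρ) {f : G → ℂ}
    (hf : ∀ g, f g⁻¹ = starRingEnd ℂ (f g)) :
    (ρ.asAlgebraHom (weightedSum f)).IsSymmetric := by
  intro v w
  simp only [asAlgebraHom_weightedSum, LinearMap.sum_apply, LinearMap.smul_apply, sum_inner,
    inner_sum, inner_smul_left, inner_smul_right, hρ.inner_apply_left, ← hf]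
  exact Fintype.sum_equiv (Equiv.inv G) _ _ fun g => rfl

theorem isSymmetric_centralIdempotent [Fintype G] {W : Type*} [NormedAddCommGroup W]
    [InnerProductSpace ℂ W] [FiniteDimensional ℂ W] {σ : Representation ℂ G W}
    (hρ : IsUnitaryRep ρ) (hσ : IsUnitaryRep σ) :
    (ρ.asAlgebraHom (centralIdempotent σ)).IsSymmetric := by
  rw [centralIdempotent, map_smul]
  refine .smul (by simp) (hρ.isSymmetric_asAlgebraHom_weightedSum fun g => ?_)
  rw [hσ.conj_repChar, hσ.conj_repChar, hσ.conj_repChar]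

end IsUnitaryRep

theorem norm_sq_apply_eq_inner {𝕜 V : Type*} [RCLike 𝕜] [NormedAddCommGroup V]
    [InnerProductSpace 𝕜 V] {P : V →ₗ[𝕜] V} (hP : P.IsSymmetricProjection) (b : V) :
    (‖P b‖ : 𝕜) ^ 2 = inner 𝕜 b (P b) := by
  rw [← inner_self_eq_norm_sq_to_K, hP.isSymmetric, ← Module.End.mul_apply,
    hP.isIdempotentElem.eq]

namespace IsCompleteFamily

variable {G J : Type*} [Group G] {W : J → Type*} [∀ j, NormedAddCommGroup (W j)]
  [∀ j, InnerProductSpace ℂ (W j)] [∀ j, FiniteDimensional ℂ (W j)]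
  {σ : ∀ j, Representation ℂ G (W j)}

theorem isIrreducible (hfam : IsCompleteFamily W σ) (j : J) : (σ j).IsIrreducible :=
  isIrreducibleRep_iff_isIrreducible.1 (hfam.2.1 j)

theorem nonempty_equiv_iff (hfam : IsCompleteFamily W σ) {i j : J} :
    Nonempty ((σ i).Equiv (σ j)) ↔ i = j := by
  refine ⟨fun h => ?_, fun h => h ▸ ⟨.refl _⟩⟩
  by_contra hij
  exact hfam.2.2.1 i j hij (repIso_iff_nonempty_equiv.2 h)

theorem exists_nonempty_equiv (hfam : IsCompleteFamily W σ) {U : Type*} [AddCommGroup U]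
    [Module ℂ U] [FiniteDimensional ℂ U] (τ : Representation ℂ G U) [τ.IsIrreducible] :
    ∃ j, Nonempty (τ.Equiv (σ j)) := by
  obtain ⟨τ', ⟨φ⟩⟩ := exists_equiv_fin_fun τ
  have : τ'.IsIrreducible := isIrreducible_of_equiv φ
  obtain ⟨j, hj⟩ := hfam.2.2.2 _ τ' (isIrreducibleRep_iff_isIrreducible.2 this)
  exact ⟨j, (repIso_iff_nonempty_equiv.1 hj).map φ.trans⟩

theorem eq_of_forall_asAlgebraHom_eq [Finite G] (hfam : IsCompleteFamily W σ) {x y : ℂ[G]}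
    (h : ∀ j, (σ j).asAlgebraHom x = (σ j).asAlgebraHom y) : x = y := by
  rw [← sub_eq_zero]
  refine eq_zero_of_forall_isIrreducible fun U _ _ _ τ _ => ?_
  obtain ⟨j, ⟨φ⟩⟩ := hfam.exists_nonempty_equiv τ
  ext u
  apply φ.toLinearEquiv.injective
  have := intertwiningMap_asAlgebraHom φ.toIntertwiningMap (x - y) u
  rw [map_sub (σ j).asAlgebraHom, h j, sub_self] at this
  simpa using this

variable [Fintype G]

theorem sum_conj_repChar_mul_repChar [DecidableEq J] (hfam : IsCompleteFamily W σ) (i j : J) :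
    ∑ g, starRingEnd ℂ (repChar (σ j) g) * repChar (σ i) g =
      if i = j then (Fintype.card G : ℂ) else 0 := by
  classical
  have := hfam.isIrreducible i
  have := hfam.isIrreducible j
  have hG : (Nat.card G : ℂ) ≠ 0 := NeZero.ne _
  have := invertibleOfNonzero hG
  have horth := Representation.char_orthonormal (σ i) (σ j)
  rw [inv_mul_eq_iff_eq_mul₀ hG, hfam.nonempty_equiv_iff] at horth
  calc ∑ g, starRingEnd ℂ (repChar (σ j) g) * repChar (σ i) g
    _ = ∑ g, (σ i).character g * (σ j).character g⁻¹ := by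
      simp only [(hfam.1 j).conj_repChar, ← repChar_eq_character, mul_comm]
    _ = if i = j then (Fintype.card G : ℂ) else 0 := by
      simp only [horth, eq_comm (a := j), Nat.card_eq_fintype_card, mul_ite, mul_one, mul_zero]

theorem asAlgebraHom_centralIdempotent [DecidableEq J] (hfam : IsCompleteFamily W σ) (i j : J) :
    (σ i).asAlgebraHom (centralIdempotent (σ j)) = if i = j then 1 else 0 := by
  have := hfam.isIrreducible i
  have : Nontrivial (W i) := nontrivial_of_isIrreducible (σ i)
  have hd : (Module.finrank ℂ (W i) : ℂ) ≠ 0 := Nat.cast_ne_zero.2 Module.finrank_pos.ne'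
  have hG : (Fintype.card G : ℂ) ≠ 0 := Nat.cast_ne_zero.2 Fintype.card_ne_zero
  have hclass (x g : G) : starRingEnd ℂ (repChar (σ j) (x * g * x⁻¹)) =
      starRingEnd ℂ (repChar (σ j) g) := by
    rw [repChar_eq_character, Representation.char_conj]
  rw [centralIdempotent, map_smul, asAlgebraHom_weightedSum_eq_smul_one hclass,
    ← repChar_eq_character, hfam.sum_conj_repChar_mul_repChar, smul_smul]
  split_ifs with hij
  · subst hij
    rw [div_mul_div_cancel₀ hG, div_self hd, one_smul]
  · rw [zero_div, mul_zero, zero_smul]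

theorem isIdempotentElem_centralIdempotent (hfam : IsCompleteFamily W σ) (j : J) :
    IsIdempotentElem (centralIdempotent (σ j)) := by
  classical
  refine hfam.eq_of_forall_asAlgebraHom_eq fun i => ?_
  rw [map_mul, hfam.asAlgebraHom_centralIdempotent]
  split_ifs <;> simp

theorem weightedSum_eq_sum_centralIdempotent [Fintype J] (hfam : IsCompleteFamily W σ) {f : G → ℂ}
    (hf : ∀ x g, f (x * g * x⁻¹) = f g) :
    weightedSum f = ∑ j, ((∑ g, f g * repChar (σ j) g) / (Module.finrank ℂ (W j) : ℂ)) •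
      centralIdempotent (σ j) := by
  classical
  refine hfam.eq_of_forall_asAlgebraHom_eq fun i => ?_
  have := hfam.isIrreducible i
  simp only [map_sum, map_smul, hfam.asAlgebraHom_centralIdempotent, smul_ite, smul_zero,
    Finset.sum_ite_eq, Finset.mem_univ, if_true]
  exact asAlgebraHom_weightedSum_eq_smul_one hf

theorem isSymmetricProjection_isoProj (hfam : IsCompleteFamily W σ) {V : Type*}
    [NormedAddCommGroup V] [InnerProductSpace ℂ V] {τ : Representation ℂ G V}
    (hτ : IsUnitaryRep τ) (j : J) :
    (isoProj (Module.finrank ℂ (W j)) (repChar (σ j)) τ).IsSymmetricProjection := by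
  rw [← _root_.asAlgebraHom_centralIdempotent]
  exact ⟨(hfam.isIdempotentElem_centralIdempotent j).map _,
    hτ.isSymmetric_centralIdempotent (hfam.1 j)⟩

theorem average_conjClass_eq_sum_isoProj [Fintype J] (hfam : IsCompleteFamily W σ) {V : Type*}
    [AddCommGroup V] [Module ℂ V] (τ : Representation ℂ G V) {M : Finset G} {m₀ : G}
    (hM : ∀ m, m ∈ M ↔ IsConj m₀ m) :
    (1 / (M.card : ℂ)) • ∑ m ∈ M, τ m =
      ∑ j, (repChar (σ j) m₀ / (Module.finrank ℂ (W j) : ℂ)) •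
        isoProj (Module.finrank ℂ (W j)) (repChar (σ j)) τ := by
  classical
  have hcard : (M.card : ℂ) ≠ 0 :=
    Nat.cast_ne_zero.2 (Finset.card_ne_zero_of_mem ((hM m₀).2 (.refl m₀)))
  let f : G → ℂ := fun g => if g ∈ M then 1 / (M.card : ℂ) else 0
  have hf (x g : G) : f (x * g * x⁻¹) = f g := by
    have hg : IsConj g (x * g * x⁻¹) := isConj_iff.2 ⟨x, rfl⟩
    have hmem : x * g * x⁻¹ ∈ M ↔ g ∈ M := by
      rw [hM, hM]
      exact ⟨fun h => h.trans hg.symm, fun h => h.trans hg⟩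
    simp only [f, hmem]
  have hχ (j : J) : ∑ g, f g * repChar (σ j) g = repChar (σ j) m₀ := by
    have hconst (m) (hm : m ∈ M) : repChar (σ j) m = repChar (σ j) m₀ := by
      obtain ⟨x, rfl⟩ := isConj_iff.1 ((hM m).1 hm)
      rw [repChar_eq_character, Representation.char_conj]
    simp only [f, ite_mul, zero_mul, Finset.sum_ite_mem, Finset.univ_inter]
    rw [← Finset.mul_sum, Finset.sum_congr rfl hconst, Finset.sum_const, nsmul_eq_mul,
      one_div, inv_mul_cancel_left₀ hcard]
  have h := congrArg τ.asAlgebraHom (hfam.weightedSum_eq_sum_centralIdempotent hf)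
  simp only [hχ, map_sum, map_smul, _root_.asAlgebraHom_centralIdempotent,
    asAlgebraHom_weightedSum] at h
  simpa only [f, ite_smul, zero_smul, Finset.sum_ite_mem, Finset.univ_inter,
    ← Finset.smul_sum] using h

theorem average_conjClass_inner [Fintype J] (hfam : IsCompleteFamily W σ) {V : Type*}
    [NormedAddCommGroup V] [InnerProductSpace ℂ V] {τ : Representation ℂ G V}
    (hτ : IsUnitaryRep τ) {M : Finset G} {m₀ : G} (hM : ∀ m, m ∈ M ↔ IsConj m₀ m) (b : V) :
    (1 / (M.card : ℂ)) * ∑ m ∈ M, ⟪b, τ m b⟫_ℂ =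
      ∑ j, repChar (σ j) m₀ / (Module.finrank ℂ (W j) : ℂ) *
        (‖isoProj (Module.finrank ℂ (W j)) (repChar (σ j)) τ b‖ : ℂ) ^ 2 := by
  have h := congrArg (fun T => ⟪b, T b⟫_ℂ) (hfam.average_conjClass_eq_sum_isoProj τ hM)
  simp only [LinearMap.smul_apply, LinearMap.sum_apply, inner_smul_right, inner_sum] at h
  rw [h]
  refine Finset.sum_congr rfl fun j _ => ?_
  congr 1
  exact (norm_sq_apply_eq_inner (hfam.isSymmetricProjection_isoProj hτ j) b).symm

end IsCompleteFamily

section Registers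

variable {G : Type*} [Group G] {k : ℕ}

/-- The homomorphism `g ↦ g^I` from `G` to `G^k`; restricting a representation of `G^k` along it
gives the action of `G` on the registers in `I`. -/
def onIHom (I : Finset (Fin k)) : G →* (Fin k → G) where
  toFun g := onI g I
  map_one' := by ext i; simp [onI]
  map_mul' x y := by ext i; by_cases hi : i ∈ I <;> simp [onI, hi]

theorem onI_empty (g : G) : onI g (∅ : Finset (Fin k)) = 1 := by
  ext i; simp [onI]

theorem onI_mul_onI {m : G} (hm : m * m = 1) (I I' : Finset (Fin k)) :
    onI m I * onI m I' = onI m (symmDiff I I') := by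
  ext i
  by_cases hi : i ∈ I <;> by_cases hi' : i ∈ I' <;> simp [onI, Finset.mem_symmDiff, hi, hi', hm]

theorem onI_inv {m : G} (hm : m * m = 1) (I : Finset (Fin k)) : (onI m I)⁻¹ = onI m I := by
  rw [inv_eq_iff_mul_eq_one, onI_mul_onI hm, symmDiff_self, Finset.bot_eq_empty, onI_empty]

theorem apply_onI_mul_invProj {V : Type*} [AddCommGroup V] [Module ℂ V]
    (ρ : Representation ℂ (Fin k → G) V) {m : G} (hm : m * m = 1) (I : Finset (Fin k)) :
    ρ (onI m I) * invProj ρ m = invProj ρ m := by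
  simp only [invProj, mul_smul_comm, Finset.mul_sum, ← map_mul, onI_mul_onI hm]
  congr 1
  exact Fintype.sum_equiv (symmDiff_right_involutive I).toPerm _ _ fun I' => rfl

theorem isIdempotentElem_invProj {V : Type*} [AddCommGroup V] [Module ℂ V]
    (ρ : Representation ℂ (Fin k → G) V) {m : G} (hm : m * m = 1) :
    IsIdempotentElem (invProj ρ m) := by
  have h2 : (2 : ℂ) ^ k ≠ 0 := pow_ne_zero _ two_ne_zero
  rw [IsIdempotentElem]
  nth_rw 1 [invProj]
  simp only [smul_mul_assoc, Finset.sum_mul, apply_onI_mul_invProj ρ hm, Finset.sum_const,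
    Finset.card_univ, Fintype.card_finset, Fintype.card_fin]
  rw [← Nat.cast_smul_eq_nsmul ℂ, Nat.cast_pow, Nat.cast_ofNat, inv_smul_smul₀ h2]

theorem inner_invProj {V : Type*} [NormedAddCommGroup V] [InnerProductSpace ℂ V]
    (ρ : Representation ℂ (Fin k → G) V) (m : G) (v w : V) :
    ⟪v, invProj ρ m w⟫_ℂ = ((2 : ℂ) ^ k)⁻¹ * ∑ I, ⟪v, ρ (onI m I) w⟫_ℂ := by
  rw [invProj, LinearMap.smul_apply, LinearMap.sum_apply, inner_smul_right, inner_sum]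

theorem isSymmetricProjection_invProj {V : Type*} [NormedAddCommGroup V] [InnerProductSpace ℂ V]
    {ρ : Representation ℂ (Fin k → G) V} (hρ : IsUnitaryRep ρ) {m : G} (hm : m * m = 1) :
    (invProj ρ m).IsSymmetricProjection := by
  refine ⟨isIdempotentElem_invProj ρ hm, fun v w => ?_⟩
  rw [inner_invProj, invProj, LinearMap.smul_apply, LinearMap.sum_apply, inner_smul_left,
    sum_inner]
  simp only [hρ.inner_apply_left, onI_inv hm, map_inv₀, map_pow, map_ofNat]

theorem norm_sq_invProj_apply {V : Type*} [NormedAddCommGroup V] [InnerProductSpace ℂ V]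
    {ρ : Representation ℂ (Fin k → G) V} (hρ : IsUnitaryRep ρ) {m : G} (hm : m * m = 1) (b : V) :
    (‖invProj ρ m b‖ : ℂ) ^ 2 = ((2 : ℂ) ^ k)⁻¹ * ∑ I, ⟪b, ρ (onI m I) b⟫_ℂ :=
  (norm_sq_apply_eq_inner (isSymmetricProjection_invProj hρ hm) b).trans (inner_invProj ρ m b b)

end Registers

theorem stmt6_general {G J : Type*} [Group G] [Fintype G] [Fintype J] {W : J → Type*}
    [∀ j, NormedAddCommGroup (W j)] [∀ j, InnerProductSpace ℂ (W j)]
    [∀ j, FiniteDimensional ℂ (W j)]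
    {σ : ∀ j, Representation ℂ G (W j)} (hfam : IsCompleteFamily W σ) {k : ℕ}
    {V : Type*} [NormedAddCommGroup V] [InnerProductSpace ℂ V]
    {ρ : Representation ℂ (Fin k → G) V} (hρ : IsUnitaryRep ρ)
    {M : Finset G} {m₀ : G} (hM : ∀ m, m ∈ M ↔ IsConj m₀ m) (hinv : ∀ m ∈ M, m * m = 1) (b : V) :
    (1 / (M.card : ℂ)) * ∑ m ∈ M, (‖invProj ρ m b‖ : ℂ) ^ 2 =
      ((2 : ℂ) ^ k)⁻¹ * ((‖b‖ : ℂ) ^ 2 +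
        ∑ I ∈ Finset.univ.filter (fun I : Finset (Fin k) => I ≠ ∅),
          ∑ j, repChar (σ j) m₀ / (Module.finrank ℂ (W j) : ℂ) *
            (‖isoProjI ρ (Module.finrank ℂ (W j)) (repChar (σ j)) I b‖ : ℂ) ^ 2) := by
  have hcard : (M.card : ℂ) ≠ 0 :=
    Nat.cast_ne_zero.2 (Finset.card_ne_zero_of_mem ((hM m₀).2 (.refl m₀)))
  have hempty : (1 / (M.card : ℂ)) * ∑ m ∈ M, ⟪b, ρ (onI m ∅) b⟫_ℂ = (‖b‖ : ℂ) ^ 2 := by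
    simp [onI_empty, hcard]
  have hregister (I : Finset (Fin k)) : (1 / (M.card : ℂ)) * ∑ m ∈ M, ⟪b, ρ (onI m I) b⟫_ℂ =
      ∑ j, repChar (σ j) m₀ / (Module.finrank ℂ (W j) : ℂ) *
        (‖isoProjI ρ (Module.finrank ℂ (W j)) (repChar (σ j)) I b‖ : ℂ) ^ 2 :=
    hfam.average_conjClass_inner (hρ.comp (onIHom I)) hM b
  rw [Finset.sum_congr rfl fun m hm => norm_sq_invProj_apply hρ (hinv m hm) b, ← Finset.mul_sum,
    Finset.sum_comm, mul_left_comm, Finset.mul_sum, ← Finset.add_sum_erase _ _ (Finset.mem_univ ∅),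
    hempty, ← Finset.filter_ne', Finset.sum_congr rfl fun I _ => hregister I]

/-- Multiregister expectation formula: for a unitary representation `ρ` of `G^k`
and a unit vector `b`, the average over `m ∈ M` of `‖Π_m b‖²` equals
`2^{-k} (1 + Σ_{∅≠I⊆[k]} Σ_j (χ_j(m₀)/d_j) ‖Π_j^I b‖²)`. -/
theorem stmt6 {G : Type*} [Group G] [Fintype G]
    {J : Type*} [Fintype J]
    (W : J → Type*) [∀ j, NormedAddCommGroup (W j)] [∀ j, InnerProductSpace ℂ (W j)]
    [∀ j, FiniteDimensional ℂ (W j)]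
    (σ : ∀ j, Representation ℂ G (W j)) (hfam : IsCompleteFamily W σ)
    {k : ℕ} (hk : 1 ≤ k)
    {V : Type*} [NormedAddCommGroup V] [InnerProductSpace ℂ V] [FiniteDimensional ℂ V]
    (ρ : Representation ℂ (Fin k → G) V) (hρu : IsUnitaryRep ρ)
    (M : Finset G) (m₀ : G) (hm₀M : m₀ ∈ M)
    (hM : ∀ m : G, m ∈ M ↔ IsConj m₀ m)
    (hinv : ∀ m ∈ M, m * m = 1 ∧ m ≠ 1)
    (b : V) (hb : ‖b‖ = 1) :
    (1 / (M.card : ℂ)) * ∑ m ∈ M, (‖invProj ρ m b‖ : ℂ) ^ 2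
      = ((2 : ℂ) ^ k)⁻¹ * (1 +
          ∑ I ∈ Finset.univ.filter (fun I : Finset (Fin k) => I ≠ ∅),
            ∑ j, repChar (σ j) m₀ / (Module.finrank ℂ (W j) : ℂ) *
              (‖isoProjI ρ (Module.finrank ℂ (W j)) (repChar (σ j)) I b‖ : ℂ) ^ 2) := by
  simpa [hb] using stmt6_general hfam hρu hM (fun m hm => (hinv m hm).1) b
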